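/- Let q be a real number with 0 < q and q ≠ 1, let h₁, h₂, α₁, λ be real numbers and t₁, t₂ nonzero reals, and let (i,i') = (1,2) or (i,i') = (2,1). Assume λ + α₁ = -N for some positive integer N (so (q^{λ+α₁};q)_n = 0 for all n > N and the series below is a finite sum). Then the function g(x) = x^{λ} · Σ_{n=0}^{N} (q^{h_i+1/2}t_i/x;q)_n · [(q^{λ+α₁};q)_n / (q;q)_n] · (x/(q^{h_{i'}-1/2}t_{i'}))^n satisfies the variant of the confluent q-hypergeometric equation of type (0,2) for all x > 0. -/

import Mathlib

/-- The finite q-shifted factorial `(a;q)_n = ∏_{i=0}^{n-1} (1 - a q^i)`. -/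
noncomputable def qPoch (q a : ℝ) (n : ℕ) : ℝ :=
  ∏ i ∈ Finset.range n, (1 - a * q ^ i)

/-- The variant of the confluent q-hypergeometric equation of type (0,2) (for `x > 0`). -/
def confEq02 (q h₁ h₂ α₁ lam t₁ t₂ : ℝ) (g : ℝ → ℝ) : Prop :=
  ∀ x : ℝ, 0 < x →
    g (q * x)
    + q ^ (2 * lam + 1) * (1 - q ^ (-h₁ - 1/2) * t₁⁻¹ * x) * (1 - q ^ (-h₂ - 1/2) * t₂⁻¹ * x)
        * g (x / q)
    - (q ^ (α₁ + 2 * lam - h₁ - h₂) * t₁⁻¹ * t₂⁻¹ * x ^ 2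
        - q ^ (lam + 1/2) * (q ^ (-h₁) * t₁⁻¹ + q ^ (-h₂) * t₂⁻¹) * x
        + q ^ lam * (q + 1)) * g x = 0

/-- Polynomial form of `(A/x;q)_n (x/B)^n`. -/
noncomputable def auxP (q A B x : ℝ) (n : ℕ) : ℝ :=
  ∏ i ∈ Finset.range n, ((x - A * q ^ i) / B)

lemma auxP_succ (q A B x : ℝ) (n : ℕ) :
    auxP q A B x (n + 1) = auxP q A B x n * ((x - A * q ^ n) / B) := by
  simp only [auxP, Finset.prod_range_succ]

lemma auxP_eq (q A B x : ℝ) (hx : x ≠ 0) (n : ℕ) :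
    qPoch q (A / x) n * (x / B) ^ n = auxP q A B x n := by
  unfold qPoch auxP
  rw [← Finset.card_range n, ← Finset.prod_const, Finset.card_range, ← Finset.prod_mul_distrib]
  refine Finset.prod_congr rfl fun i _ => ?_
  rw [← mul_div_assoc]
  congr 1
  field_simp

lemma auxP_mul (q A B x : ℝ) (hq : q ≠ 0) (n : ℕ) :
    auxP q A B (q * x) (n + 1) = q ^ (n + 1) * ((x - A / q) / B) * auxP q A B x n := by
  induction n with
  | zero => simp [auxP]; field_simp
  | succ n ih =>
    rw [auxP_succ, ih, auxP_succ q A B x n]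
    ring

lemma auxP_div (q A B x : ℝ) (hq : q ≠ 0) (hA : A ≠ 0) (hB : B ≠ 0) (n : ℕ) :
    (1 - x / A) * auxP q A B (x / q) n = -(B / A) * (q ^ n)⁻¹ * auxP q A B x (n + 1) := by
  induction n with
  | zero => simp [auxP]; field_simp; ring
  | succ n ih =>
    rw [auxP_succ, ← mul_assoc, ih, auxP_succ q A B x (n + 1)]
    field_simp
    ring

lemma aux_sum (q A B c x : ℝ) (hq : q ≠ 0) (hA : A ≠ 0) (hB : B ≠ 0) (u : ℕ → ℝ)
    (hu : ∀ n, u (n + 1) * (1 - q ^ (n + 1)) = u n * (1 - c * q ^ n)) (M : ℕ) :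
    ∑ n ∈ Finset.range (M + 1), u n * (auxP q A B (q * x) n
      + q * (1 - x / (q * B)) * ((1 - x / A) * auxP q A B (x / q) n)
      - (c * x ^ 2 / (A * B) - (q / A + 1 / B) * x + (q + 1)) * auxP q A B x n)
    = u M * (1 - c * q ^ M) * ((B / A) * (q ^ M)⁻¹ * auxP q A B x (M + 2)
      + (1 + q) * auxP q A B x (M + 1) + (A / B) * q ^ M * auxP q A B x M) := by
  induction M with
  | zero =>
    simp [auxP, Finset.prod_range_succ]
    field_simp
    ring
  | succ M ih =>
    rw [Finset.sum_range_succ, ih, ← hu M, auxP_div q A B x hq hA hB, auxP_mul q A B x hq,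
      auxP_succ q A B x (M + 2), auxP_succ q A B x (M + 1), auxP_succ q A B x M]
    field_simp
    ring

lemma qPoch_succ (q a : ℝ) (n : ℕ) : qPoch q a (n + 1) = qPoch q a n * (1 - a * q ^ n) := by
  simp [qPoch, Finset.prod_range_succ]

lemma aux_main (q A B c L x : ℝ) (lam : ℝ) (hq : 0 < q) (hq1 : q ≠ 1) (hA : A ≠ 0) (hB : B ≠ 0)
    (N : ℕ) (hc : c * q ^ N = 1) (hL : L = q ^ lam) (hx : 0 < x) (g : ℝ → ℝ)
    (hg : ∀ y, g y = y ^ lam * ∑ n ∈ Finset.range (N + 1),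
        qPoch q (A / y) n * (qPoch q c n / qPoch q q n) * (y / B) ^ n) :
    g (q * x) + L ^ 2 * q * (1 - x / A) * (1 - x / (q * B)) * g (x / q)
      - (L * c / (A * B) * x ^ 2 - L * (q / A + 1 / B) * x + L * (q + 1)) * g x = 0 := by
  have hpow : ∀ n : ℕ, 1 - q ^ (n + 1) ≠ 0 := fun n h =>
    hq1 ((pow_eq_one_iff_of_nonneg hq.le (n.succ_ne_zero)).1 (by simpa using (sub_eq_zero.1 h).symm))
  have hqq : ∀ n, qPoch q q n ≠ 0 := fun n => Finset.prod_ne_zero_iff.2 fun i _ => by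
    rw [← pow_succ']; exact hpow i
  set u : ℕ → ℝ := fun n => qPoch q c n / qPoch q q n with hudef
  have hu : ∀ n, u (n + 1) * (1 - q ^ (n + 1)) = u n * (1 - c * q ^ n) := by
    intro n
    have h1 := hqq n
    have h2 := hpow n
    simp only [hudef, qPoch_succ]
    rw [← pow_succ']
    field_simp
  have hg' : ∀ y, 0 < y → g y = y ^ lam * ∑ n ∈ Finset.range (N + 1), u n * auxP q A B y n := by
    intro y hy
    rw [hg]
    congr 1
    refine Finset.sum_congr rfl fun n _ => ?_
    rw [← auxP_eq q A B y hy.ne']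
    simp only [hudef]
    ring
  have key := aux_sum q A B c x hq.ne' hA hB u hu N
  rw [hc, sub_self, mul_zero, zero_mul] at key
  have hLpos : 0 < L := hL ▸ Real.rpow_pos_of_pos hq lam
  rw [hg' _ (mul_pos hq hx), hg' _ (div_pos hx hq), hg' _ hx, Real.mul_rpow hq.le hx.le,
    Real.div_rpow hx.le hq.le, ← hL]
  have key2 : ∑ n ∈ Finset.range (N + 1), u n * auxP q A B (q * x) n
      + q * (1 - x / (q * B)) * (1 - x / A) *
        ∑ n ∈ Finset.range (N + 1), u n * auxP q A B (x / q) n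
      - (c * x ^ 2 / (A * B) - (q / A + 1 / B) * x + (q + 1)) *
        ∑ n ∈ Finset.range (N + 1), u n * auxP q A B x n = 0 := by
    rw [← key, Finset.mul_sum, Finset.mul_sum, ← Finset.sum_add_distrib, ← Finset.sum_sub_distrib]
    refine Finset.sum_congr rfl fun n _ => ?_
    ring
  have hLL : L ^ 2 * (x ^ lam / L) = L * x ^ lam := by field_simp
  linear_combination (L * x ^ lam) * key2 + (q * (1 - x / A) * (1 - x / (q * B)) *
    ∑ n ∈ Finset.range (N + 1), u n * auxP q A B (x / q) n) * hLL

lemma aux_eq (q h k α lam t s : ℝ) (N : ℕ) (hq : 0 < q) (hq1 : q ≠ 1) (ht : t ≠ 0) (hs : s ≠ 0)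
    (hNlam : lam + α = -(N : ℝ)) :
    confEq02 q h k α lam t s (fun x =>
      x ^ lam * ∑ n ∈ Finset.range (N + 1),
        qPoch q (q ^ (h + 1/2) * t / x) n * (qPoch q (q ^ (lam + α)) n / qPoch q q n) *
          (x / (q ^ (k - 1/2) * s)) ^ n) := by
  intro x hx
  have hA : q ^ (h + 1/2) * t ≠ 0 := mul_ne_zero (Real.rpow_pos_of_pos hq _).ne' ht
  have hB : q ^ (k - 1/2) * s ≠ 0 := mul_ne_zero (Real.rpow_pos_of_pos hq _).ne' hs
  have hc : q ^ (lam + α) * q ^ N = 1 := by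
    rw [hNlam, ← Real.rpow_natCast, ← Real.rpow_add hq]; simp
  have main := aux_main q _ _ _ (q ^ lam) x lam hq hq1 hA hB N hc rfl hx _ (fun y => rfl)
  have e1 : q ^ (2 * lam + 1) = (q ^ lam) ^ 2 * q := by
    rw [Real.rpow_add hq, Real.rpow_one, two_mul, Real.rpow_add hq, sq]
  have e2 : q ^ (-h - 1/2) * t⁻¹ * x = x / (q ^ (h + 1/2) * t) := by
    rw [show -h - 1/2 = -(h + 1/2) by ring, Real.rpow_neg hq.le]; field_simp
  have e3 : q ^ (-k - 1/2) * s⁻¹ * x = x / (q * (q ^ (k - 1/2) * s)) := by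
    rw [show -k - 1/2 = -(1 + (k - 1/2)) by ring, Real.rpow_neg hq.le, Real.rpow_add hq,
      Real.rpow_one]
    field_simp
  have e4 : q ^ (α + 2 * lam - h - k) * t⁻¹ * s⁻¹
      = q ^ lam * q ^ (lam + α) / (q ^ (h + 1/2) * t * (q ^ (k - 1/2) * s)) := by
    rw [show α + 2 * lam - h - k = lam + (lam + α) + (-(h + 1/2)) + (-(k - 1/2)) by ring,
      Real.rpow_add hq, Real.rpow_add hq, Real.rpow_add hq lam, Real.rpow_neg hq.le,
      Real.rpow_neg hq.le]
    field_simp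
  have e5 : q ^ (lam + 1/2) * (q ^ (-h) * t⁻¹ + q ^ (-k) * s⁻¹)
      = q ^ lam * (q / (q ^ (h + 1/2) * t) + 1 / (q ^ (k - 1/2) * s)) := by
    have a1 : q ^ (1/2 : ℝ) * q ^ (-h) = q * (q ^ (h + 1/2))⁻¹ := by
      rw [← Real.rpow_neg hq.le, ← Real.rpow_add hq]
      nth_rewrite 2 [← Real.rpow_one q]
      rw [← Real.rpow_add hq]; congr 1; ring
    have a2 : q ^ (1/2 : ℝ) * q ^ (-k) = (q ^ (k - 1/2))⁻¹ := by
      rw [← Real.rpow_neg hq.le, ← Real.rpow_add hq]; congr 1; ring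
    rw [Real.rpow_add hq, div_eq_mul_inv q, one_div (q ^ (k - 1/2) * s), mul_inv, mul_inv]
    linear_combination q ^ lam * t⁻¹ * a1 + q ^ lam * s⁻¹ * a2
  rw [e1, e2, e3, e4, e5]
  exact main

theorem stmt10 (q h₁ h₂ α₁ lam t₁ t₂ hᵢ hᵢ' tᵢ tᵢ' : ℝ) (N : ℕ)
    (hq : 0 < q) (hq1 : q ≠ 1) (ht₁ : t₁ ≠ 0) (ht₂ : t₂ ≠ 0)
    (hidx : (hᵢ, hᵢ', tᵢ, tᵢ') = (h₁, h₂, t₁, t₂) ∨ (hᵢ, hᵢ', tᵢ, tᵢ') = (h₂, h₁, t₂, t₁))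
    (hN : 0 < N) (hNlam : lam + α₁ = -(N : ℝ)) :
    confEq02 q h₁ h₂ α₁ lam t₁ t₂ (fun x =>
      x ^ lam * ∑ n ∈ Finset.range (N + 1),
        qPoch q (q ^ (hᵢ + 1/2) * tᵢ / x) n * (qPoch q (q ^ (lam + α₁)) n / qPoch q q n) *
          (x / (q ^ (hᵢ' - 1/2) * tᵢ')) ^ n) := by
  rcases hidx with h | h
  · simp only [Prod.mk.injEq] at h
    obtain ⟨rfl, rfl, rfl, rfl⟩ := h
    exact aux_eq q _ _ α₁ lam _ _ N hq hq1 ht₁ ht₂ hNlam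
  · simp only [Prod.mk.injEq] at h
    obtain ⟨rfl, rfl, rfl, rfl⟩ := h
    have main := aux_eq q hᵢ hᵢ' α₁ lam tᵢ tᵢ' N hq hq1 ht₂ ht₁ hNlam
    intro x hx
    have m := main x hx
    rw [show α₁ + 2 * lam - hᵢ' - hᵢ = α₁ + 2 * lam - hᵢ - hᵢ' by ring]
    linear_combination m
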